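/- arXiv:0705.2404 — 3 statements merged into one kernel-verified Lean document; each statement's English description precedes it below -/
import Mathlib

section
/- Let G be a nonempty position of the octal game 4.7, let H = H_k be a heap of maximal size appearing in G, and let X be G with one copy of H_k removed (so G = X + H). Then G is a misère P-position if and only if one of the following holds: (i) t(G) = 0 and g(G) = 1; (ii) t(G) ≠ 0, w(H) ≤ t(X), and g(G) = 0; or (iii) t(G) ≠ 0, w(H) ≥ t(X) + 2, and g(G) = 3. -/
/-- The minimum excludant of a set of naturals. -/
noncomputable def mex (s : Set ℕ) : ℕ := sInf {n | n ∉ s}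

/-- One legal move in the octal game 4.7: split a heap into two nonempty heaps
removing no beans; or remove 1 bean, either removing the whole heap, leaving
one nonempty heap, or splitting the remainder into two nonempty heaps.
Positions are finite multisets of heap sizes. -/
def Move47 (G G' : Multiset ℕ) : Prop :=
  (∃ k ∈ G, ∃ i j : ℕ, 1 ≤ i ∧ 1 ≤ j ∧ i + j = k ∧ G' = i ::ₘ j ::ₘ G.erase k) ∨
  (1 ∈ G ∧ G' = G.erase 1) ∨
  (∃ k ∈ G, 2 ≤ k ∧ G' = (k - 1) ::ₘ G.erase k) ∨
  (∃ k ∈ G, 3 ≤ k ∧ ∃ i j : ℕ, 1 ≤ i ∧ 1 ≤ j ∧ i + j = k - 1 ∧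
    G' = i ::ₘ j ::ₘ G.erase k)

/-- The function `t` on single heaps for 4.7. -/
def t47 (k : ℕ) : ℕ :=
  if k = 1 then 0 else if k = 2 then 1 else k - 3

/-- The function `w` on single heaps for 4.7. -/
def w47 (k : ℕ) : ℕ :=
  if k ≤ 4 then 0 else if k = 5 then 1 else k - 6

/-- `t` extended additively to positions. -/
def tPos47 (G : Multiset ℕ) : ℕ := (G.map t47).sum

/-!
The normal-play value of a position is the nim-sum of its heaps, where an odd heap counts `1` and an
even heap counts `2`: splitting a heap changes this number by `2`, shrinking a heap by one bean
changes it by `3`, and the other moves change it by `1` (always in the sense of nim-addition).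

For the misère outcome, compare the threshold `w(j) + t(j)` of each heap with `T = t(G)`. Call `G`
balanced if `T ≠ 0` and no threshold exceeds `T`, and dominated if some threshold is at least
`T + 2`. From size `5` on the threshold is nondecreasing in the size, and for smaller heaps it is
just `t(j) ≤ T`, so both notions can be read off from a largest heap. The P-positions are those with
`T = 0` and value `1`, the balanced ones with value `0`, and the dominated ones with value `3`.

No move joins two of these positions. Between a balanced and a dominated one the values differ by
`3`, so the move would have to shrink a heap, which changes `T` by at most one. A move between
`T = 0` and a dominated position would be a split, and one between `T = 0` and a balanced position
would remove a bean and change the value by `1`; neither exists, as only the heaps `1` and `3` have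
`t = 0`.

Conversely, every other nonempty position has such an option. If the value is `0` but some threshold
exceeds `T`, one lowers `T` by shrinking another heap. Otherwise let `k` be a largest heap and `X`
the rest. If `w(k) ≤ t(X) + 1`, a slight reduction of `k` leads to a balanced position of value `0`;
if `k` dominates, it is cut into two nearly equal pieces. Small heaps lead to a few exceptions.
-/

/-! ### Uniqueness of Grundy values and misère outcomes -/

section ImpartialGame

variable {α : Type*} {move : α → α → Prop} {valid : α → Prop}

lemma mex_eq_of_notMem {s : Set ℕ} {n : ℕ} (hn : n ∉ s) (hlt : ∀ u < n, u ∈ s) : mex s = n :=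
  le_antisymm (Nat.sInf_le hn) (le_csInf ⟨n, hn⟩ fun _ hm => not_lt.1 fun h => hm (hlt _ h))

theorem grundy_unique (hwf : WellFounded fun G' G => move G G')
    (hvalid : ∀ ⦃G G'⦄, move G G' → valid G → valid G') {g f : α → ℕ}
    (hg : ∀ G, valid G → g G = mex {m | ∃ G', move G G' ∧ g G' = m})
    (hf : ∀ G, valid G → f G = mex {m | ∃ G', move G G' ∧ f G' = m}) {G : α} (hG : valid G) :
    g G = f G := by
  induction G using hwf.induction with
  | _ G ih =>
    rw [hg G hG, hf G hG]
    congr 1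
    ext m
    exact exists_congr fun G' => and_congr_right fun h => by rw [ih G' h (hvalid h hG)]

theorem misereP_unique (hwf : WellFounded fun G' G => move G G')
    (hvalid : ∀ ⦃G G'⦄, move G G' → valid G → valid G') {P Q : α → Prop}
    (hP : ∀ G, valid G → (P G ↔ (∃ G', move G G') ∧ ∀ G', move G G' → ¬ P G'))
    (hQ : ∀ G, valid G → (Q G ↔ (∃ G', move G G') ∧ ∀ G', move G G' → ¬ Q G'))
    {G : α} (hG : valid G) : P G ↔ Q G := by
  induction G using hwf.induction with
  | _ G ih =>
    rw [hP G hG, hQ G hG]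
    exact and_congr_right fun _ => forall₂_congr fun G' h => not_congr (ih G' h (hvalid h hG))

end ImpartialGame

/-! ### Moves -/

namespace Move47

variable {G G' X : Multiset ℕ} {i j k : ℕ}

lemma split (hi : 1 ≤ i) (hj : 1 ≤ j) (h : i + j = k) : Move47 (k ::ₘ X) (i ::ₘ j ::ₘ X) :=
  Or.inl ⟨k, by simp, i, j, hi, hj, h, by simp⟩

lemma remove : Move47 (1 ::ₘ X) X :=
  Or.inr <| Or.inl ⟨by simp, by simp⟩

lemma shrink (hi : 1 ≤ i) (h : i + 1 = k) : Move47 (k ::ₘ X) (i ::ₘ X) :=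
  Or.inr <| Or.inr <| Or.inl ⟨k, by simp, by omega, by simp [← h]⟩

lemma shrink_split (hi : 1 ≤ i) (hj : 1 ≤ j) (h : i + j + 1 = k) :
    Move47 (k ::ₘ X) (i ::ₘ j ::ₘ X) :=
  Or.inr <| Or.inr <| Or.inr ⟨k, by simp, by omega, i, j, hi, hj, by omega, by simp⟩

@[elab_as_elim]
theorem cases_on_heap {motive : ∀ G G', Move47 G G' → Prop}
    (split : ∀ i j k X (hi : 1 ≤ i) (hj : 1 ≤ j) (h : i + j = k),
      motive (k ::ₘ X) (i ::ₘ j ::ₘ X) (split hi hj h))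
    (remove : ∀ X, motive (1 ::ₘ X) X remove)
    (shrink : ∀ i k X (hi : 1 ≤ i) (h : i + 1 = k),
      motive (k ::ₘ X) (i ::ₘ X) (shrink hi h))
    (shrink_split : ∀ i j k X (hi : 1 ≤ i) (hj : 1 ≤ j) (h : i + j + 1 = k),
      motive (k ::ₘ X) (i ::ₘ j ::ₘ X) (shrink_split hi hj h))
    (h : Move47 G G') : motive G G' h := by
  have isolate {k : ℕ} (hk : k ∈ G) : ∃ X, G = k ::ₘ X := Multiset.exists_cons_of_mem hk
  rcases id h with ⟨k, hk, i, j, hi, hj, hij, rfl⟩ | ⟨hk, rfl⟩ | ⟨k, hk, hk2, rfl⟩ |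
      ⟨k, hk, hk3, i, j, hi, hj, hij, rfl⟩ <;>
    obtain ⟨X, rfl⟩ := isolate hk <;> revert h <;> rw [Multiset.erase_cons_head] <;> intro _
  · exact split i j k X hi hj hij
  · exact remove X
  · exact shrink (k - 1) k X (by omega) (by omega)
  · exact shrink_split i j k X hi hj (by omega)

lemma forall_pos (h : Move47 G G') (hG : ∀ j ∈ G, 1 ≤ j) : ∀ j ∈ G', 1 ≤ j := by
  induction h using cases_on_heap <;> simp_all

lemma forall_le {n : ℕ} (h : Move47 G G') (hG : ∀ j ∈ G, j ≤ n) : ∀ j ∈ G', j ≤ n := by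
  induction h using cases_on_heap <;>
    simp only [Multiset.forall_mem_cons] at hG ⊢ <;> grind

/-- Counting `-1` per heap makes the sum drop even when a split removes no bean. -/
lemma sum_map_lt (h : Move47 G G') :
    (G'.map fun k => 2 * k - 1).sum < (G.map fun k => 2 * k - 1).sum := by
  induction h using cases_on_heap <;> simp only [Multiset.map_cons, Multiset.sum_cons] <;> omega

theorem wellFounded : WellFounded fun G' G => Move47 G G' :=
  Subrelation.wf sum_map_lt (measure fun G : Multiset ℕ => (G.map fun k => 2 * k - 1).sum).wf

lemma exists_of_ne_zero (hG : ∀ j ∈ G, 1 ≤ j) (hne : G ≠ 0) : ∃ G', Move47 G G' := by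
  obtain ⟨k, hk⟩ := Multiset.exists_mem_of_ne_zero hne
  obtain ⟨X, rfl⟩ := Multiset.exists_cons_of_mem hk
  obtain rfl | hk2 := (hG k hk).eq_or_lt
  · exact ⟨X, remove⟩
  · exact ⟨(k - 1) ::ₘ X, shrink (by omega) (by omega)⟩

end Move47

/-! ### The normal-play value -/

section NimValue

variable {G G' X : Multiset ℕ} {i j k : ℕ}

/-- The normal-play value of a single nonempty heap; the value at `k = 0` is meaningless. -/
def heapValue47 (k : ℕ) : ℕ := if Even k then 2 else 1

/-- The nim-sum of the heap values; `nimValue47_eq_mex` shows that it is the normal-play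
Grundy value of a position. -/
def nimValue47 (G : Multiset ℕ) : ℕ := (G.map heapValue47).fold (· ^^^ ·) 0

lemma nimValue47_cons (k : ℕ) (X : Multiset ℕ) :
    nimValue47 (k ::ₘ X) = heapValue47 k ^^^ nimValue47 X := by
  simp [nimValue47]

lemma nimValue47_lt_four (G : Multiset ℕ) : nimValue47 G < 4 := by
  induction G using Multiset.induction with
  | empty => simp [nimValue47]
  | cons k X ih =>
    rw [nimValue47_cons]
    exact Nat.xor_lt_two_pow (n := 2) (by unfold heapValue47; split_ifs <;> norm_num) ih

lemma heapValue47_succ (k : ℕ) : heapValue47 (k + 1) = heapValue47 k ^^^ 3 := by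
  by_cases hk : Even k <;> simp [heapValue47, hk, Nat.even_add_one]

lemma heapValue47_add (i j : ℕ) : heapValue47 (i + j) = heapValue47 i ^^^ heapValue47 j ^^^ 2 := by
  by_cases hi : Even i <;> by_cases hj : Even j <;> simp [heapValue47, hi, hj, Nat.even_add]

lemma nimValue47_split (h : i + j = k) :
    nimValue47 (i ::ₘ j ::ₘ X) = nimValue47 (k ::ₘ X) ^^^ 2 := by
  simp only [nimValue47_cons, ← h, heapValue47_add]
  rw [Nat.xor_right_comm, Nat.xor_xor_cancel_right, Nat.xor_assoc]

lemma nimValue47_remove : nimValue47 X = nimValue47 (1 ::ₘ X) ^^^ 1 := by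
  simp [nimValue47_cons, heapValue47, Nat.xor_comm 1]

lemma nimValue47_shrink (h : i + 1 = k) : nimValue47 (i ::ₘ X) = nimValue47 (k ::ₘ X) ^^^ 3 := by
  simp only [nimValue47_cons, ← h, heapValue47_succ]
  rw [Nat.xor_right_comm, Nat.xor_xor_cancel_right]

lemma nimValue47_shrink_split (h : i + j + 1 = k) :
    nimValue47 (i ::ₘ j ::ₘ X) = nimValue47 (k ::ₘ X) ^^^ 1 := by
  rw [nimValue47_split rfl, nimValue47_shrink h, Nat.xor_assoc]
  rfl

lemma nimValue47_le_one_of_forall_odd (hG : ∀ j ∈ G, Odd j) : nimValue47 G ≤ 1 := by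
  induction G using Multiset.induction with
  | empty => simp [nimValue47]
  | cons k X ih =>
    rw [Multiset.forall_mem_cons] at hG
    have hk : heapValue47 k = 1 := if_neg (Nat.not_even_iff_odd.2 hG.1)
    rw [nimValue47_cons, hk]
    exact Nat.le_of_lt_succ <|
      Nat.xor_lt_two_pow (n := 1) (by norm_num) (Nat.lt_succ_of_le (ih hG.2))

lemma nimValue47_eq_zero_or_two_of_forall_even (hG : ∀ j ∈ G, Even j) :
    nimValue47 G = 0 ∨ nimValue47 G = 2 := by
  induction G using Multiset.induction with
  | empty => simp [nimValue47]
  | cons k X ih =>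
    rw [Multiset.forall_mem_cons] at hG
    have hk : heapValue47 k = 2 := if_pos hG.1
    rcases ih hG.2 with hX | hX <;> simp [nimValue47_cons, hk, hX]

lemma exists_even_of_one_lt_nimValue47 (h : 1 < nimValue47 G) : ∃ j ∈ G, Even j := by
  by_contra! hodd
  exact h.not_ge <| nimValue47_le_one_of_forall_odd fun j hj => Nat.not_even_iff_odd.1 (hodd j hj)

lemma exists_odd_of_nimValue47_ne (h0 : nimValue47 G ≠ 0) (h2 : nimValue47 G ≠ 2) :
    ∃ j ∈ G, Odd j := by
  by_contra! heven
  have := nimValue47_eq_zero_or_two_of_forall_even fun j hj => Nat.not_odd_iff_even.1 (heven j hj)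
  tauto

lemma Move47.nimValue47_ne (h : Move47 G G') : nimValue47 G' ≠ nimValue47 G := by
  have xor_ne {d : ℕ} (n : ℕ) (hd : d ≠ 0) : n ^^^ d ≠ n := by simpa using hd
  induction h using Move47.cases_on_heap with
  | split i j k X _ _ h => rw [nimValue47_split h]; exact xor_ne _ two_ne_zero
  | remove X => rw [nimValue47_remove]; exact xor_ne _ one_ne_zero
  | shrink i k X _ h => rw [nimValue47_shrink h]; exact xor_ne _ three_ne_zero
  | shrink_split i j k X _ _ h => rw [nimValue47_shrink_split h]; exact xor_ne _ one_ne_zero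

lemma exists_move47_xor_one (hk : k ∈ G) (hodd : Odd k) :
    ∃ G', Move47 G G' ∧ nimValue47 G' = nimValue47 G ^^^ 1 := by
  obtain ⟨X, rfl⟩ := Multiset.exists_cons_of_mem hk
  obtain ⟨m, rfl⟩ := hodd
  obtain rfl | hm := m.eq_zero_or_pos
  · exact ⟨X, .remove, nimValue47_remove⟩
  · exact ⟨m ::ₘ m ::ₘ X, .shrink_split hm hm (by omega), nimValue47_shrink_split (by omega)⟩

lemma exists_move47_xor_two (hk : k ∈ G) (hk2 : 2 ≤ k) :
    ∃ G', Move47 G G' ∧ nimValue47 G' = nimValue47 G ^^^ 2 := by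
  obtain ⟨X, rfl⟩ := Multiset.exists_cons_of_mem hk
  exact ⟨1 ::ₘ (k - 1) ::ₘ X, .split le_rfl (by omega) (by omega), nimValue47_split (by omega)⟩

lemma exists_move47_xor_three (hk : k ∈ G) (hk2 : 2 ≤ k) :
    ∃ G', Move47 G G' ∧ nimValue47 G' = nimValue47 G ^^^ 3 := by
  obtain ⟨X, rfl⟩ := Multiset.exists_cons_of_mem hk
  exact ⟨(k - 1) ::ₘ X, .shrink (by omega) (by omega), nimValue47_shrink (by omega)⟩

lemma exists_move47_nimValue47_eq (hG : ∀ j ∈ G, 1 ≤ j) {u : ℕ} (hu : u < nimValue47 G) :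
    ∃ G', Move47 G G' ∧ nimValue47 G' = u := by
  have hlt := nimValue47_lt_four G
  by_cases hflip : nimValue47 G = u + 1 ∧ u ≠ 1
  · obtain ⟨k, hk, hodd⟩ := exists_odd_of_nimValue47_ne (G := G) (by omega) (by omega)
    obtain ⟨G', hmove, hval⟩ := exists_move47_xor_one hk hodd
    refine ⟨G', hmove, hval.trans ?_⟩
    obtain rfl | rfl : u = 0 ∨ u = 2 := by omega
    all_goals simp [hflip.1]
  · obtain ⟨k, hk, heven⟩ := exists_even_of_one_lt_nimValue47 (G := G) (by omega)
    have hk2 : 2 ≤ k := by have := hG k hk; grind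
    obtain ⟨G₂, hmove₂, hval₂⟩ := exists_move47_xor_two hk hk2
    obtain ⟨G₃, hmove₃, hval₃⟩ := exists_move47_xor_three hk hk2
    obtain ⟨rfl, hn⟩ | ⟨rfl, hn⟩ | ⟨rfl, hn⟩ | ⟨rfl, hn⟩ :
        u = 0 ∧ nimValue47 G = 2 ∨ u = 1 ∧ nimValue47 G = 3 ∨
        u = 0 ∧ nimValue47 G = 3 ∨ u = 1 ∧ nimValue47 G = 2 := by omega
    · exact ⟨G₂, hmove₂, by simp [hval₂, hn]⟩
    · exact ⟨G₂, hmove₂, by simp [hval₂, hn]⟩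
    · exact ⟨G₃, hmove₃, by simp [hval₃, hn]⟩
    · exact ⟨G₃, hmove₃, by simp [hval₃, hn]⟩

theorem nimValue47_eq_mex (hG : ∀ j ∈ G, 1 ≤ j) :
    nimValue47 G = mex {m | ∃ G', Move47 G G' ∧ nimValue47 G' = m} :=
  .symm <| mex_eq_of_notMem (fun ⟨_, hmove, hval⟩ => hmove.nimValue47_ne hval)
    fun _ hu => exists_move47_nimValue47_eq hG hu

end NimValue

/-! ### Balanced and dominated positions -/

section Threshold

variable {G X : Multiset ℕ} {i j k : ℕ}

/-- The least value of `t` for which a position containing the heap `k` can be balanced. -/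
def threshold47 (k : ℕ) : ℕ := w47 k + t47 k

/-- `t` is nonzero and no heap is large compared with the others. -/
def Balanced47 (G : Multiset ℕ) : Prop := tPos47 G ≠ 0 ∧ ∀ j ∈ G, threshold47 j ≤ tPos47 G

/-- Some heap outweighs all the others; its threshold exceeds `t` by at least `2`. -/
def Dominated47 (G : Multiset ℕ) : Prop := ∃ j ∈ G, tPos47 G + 2 ≤ threshold47 j

/-- The claimed criterion for misère P-positions, without reference to a largest heap. -/
def PCriterion47 (G : Multiset ℕ) : Prop :=
  (tPos47 G = 0 ∧ nimValue47 G = 1) ∨ (Balanced47 G ∧ nimValue47 G = 0) ∨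
    (Dominated47 G ∧ nimValue47 G = 3)

lemma t47_cases (k : ℕ) : (k ≤ 1 ∧ t47 k = 0) ∨ (k = 2 ∧ t47 k = 1) ∨ (3 ≤ k ∧ t47 k + 3 = k) := by
  unfold t47; split_ifs <;> omega

lemma w47_cases (k : ℕ) : (k ≤ 4 ∧ w47 k = 0) ∨ (k = 5 ∧ w47 k = 1) ∨ (6 ≤ k ∧ w47 k + 6 = k) := by
  unfold w47; split_ifs <;> omega

lemma tPos47_cons (k : ℕ) (X : Multiset ℕ) : tPos47 (k ::ₘ X) = t47 k + tPos47 X := by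
  simp [tPos47]

lemma t47_le_tPos47 (hj : j ∈ G) : t47 j ≤ tPos47 G :=
  Multiset.le_sum_of_mem (Multiset.mem_map_of_mem t47 hj)

lemma le_three_of_tPos47_eq_zero (hG : tPos47 G = 0) (hj : j ∈ G) : j ≤ 3 := by
  have := t47_cases j
  have := t47_le_tPos47 hj
  omega

lemma odd_of_tPos47_eq_zero (hpos : ∀ j ∈ G, 1 ≤ j) (hG : tPos47 G = 0) : ∀ j ∈ G, Odd j := by
  intro j hj
  have := hpos j hj
  have := t47_cases j
  have := t47_le_tPos47 hj
  rw [Nat.odd_iff]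
  omega

lemma threshold47_le_w47_add_tPos47 (hj : j ∈ G) : threshold47 j ≤ w47 j + tPos47 G :=
  Nat.add_le_add_left (t47_le_tPos47 hj) _

lemma threshold47_le_tPos47_cons_iff : threshold47 k ≤ tPos47 (k ::ₘ X) ↔ w47 k ≤ tPos47 X := by
  rw [threshold47, tPos47_cons, add_comm (t47 k)]
  exact Nat.add_le_add_iff_right

lemma threshold47_le_of_le_of_mem (hj : j ∈ G) (hjk : j ≤ k) :
    threshold47 j ≤ max (threshold47 k) (tPos47 G) := by
  have := t47_cases j
  have := t47_cases k
  have := w47_cases j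
  have := w47_cases k
  have := t47_le_tPos47 hj
  simp only [threshold47]
  omega

lemma Dominated47.exists_eight_le (hG : Dominated47 G) : ∃ j ∈ G, 8 ≤ j := by
  obtain ⟨j, hj, hdom⟩ := hG
  have := threshold47_le_w47_add_tPos47 hj
  have := w47_cases j
  exact ⟨j, hj, by omega⟩

lemma Dominated47.tPos47_ne_zero (hG : Dominated47 G) : tPos47 G ≠ 0 := by
  intro h0
  obtain ⟨j, hj, hj8⟩ := hG.exists_eight_le
  have := le_three_of_tPos47_eq_zero h0 hj
  omega

lemma balanced47_cons_iff (hmax : ∀ j ∈ X, j ≤ k) :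
    Balanced47 (k ::ₘ X) ↔ tPos47 (k ::ₘ X) ≠ 0 ∧ w47 k ≤ tPos47 X := by
  rw [← threshold47_le_tPos47_cons_iff]
  refine and_congr_right fun _ => ⟨fun h => h k (Multiset.mem_cons_self k X), fun hk j hj => ?_⟩
  have hjk : j ≤ k := (Multiset.mem_cons.1 hj).elim Eq.le (hmax j)
  exact (threshold47_le_of_le_of_mem hj hjk).trans (max_le hk le_rfl)

lemma dominated47_cons_iff (hmax : ∀ j ∈ X, j ≤ k) :
    Dominated47 (k ::ₘ X) ↔ tPos47 (k ::ₘ X) ≠ 0 ∧ tPos47 X + 2 ≤ w47 k := by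
  have hk : tPos47 (k ::ₘ X) + 2 ≤ threshold47 k ↔ tPos47 X + 2 ≤ w47 k := by
    rw [tPos47_cons, threshold47]; omega
  refine ⟨fun h => ⟨h.tPos47_ne_zero, hk.1 ?_⟩, fun h => ⟨k, by simp, hk.2 h.2⟩⟩
  obtain ⟨j, hj, hdom⟩ := h
  have hjk : j ≤ k := (Multiset.mem_cons.1 hj).elim Eq.le (hmax j)
  have := threshold47_le_of_le_of_mem hj hjk
  omega

lemma balanced47_of_forall_le_four (hG : ∀ j ∈ G, j ≤ 4) (h0 : tPos47 G ≠ 0) : Balanced47 G := by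
  refine ⟨h0, fun j hj => ?_⟩
  have hw : w47 j = 0 := if_pos (hG j hj)
  simpa [hw] using threshold47_le_w47_add_tPos47 hj

lemma balanced47_cons (h0 : t47 i + tPos47 X ≠ 0) (hi : w47 i ≤ tPos47 X)
    (hX : ∀ x ∈ X, w47 x ≤ t47 i) : Balanced47 (i ::ₘ X) := by
  refine ⟨by rwa [tPos47_cons], Multiset.forall_mem_cons.2
    ⟨threshold47_le_tPos47_cons_iff.2 hi, fun x hx => ?_⟩⟩
  rw [tPos47_cons]
  exact (threshold47_le_w47_add_tPos47 hx).trans (Nat.add_le_add_right (hX x hx) _)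

lemma balanced47_cons_cons (h0 : t47 i + t47 j ≠ 0) (hi : w47 i ≤ t47 j + tPos47 X)
    (hj : w47 j ≤ t47 i + tPos47 X) (hX : ∀ x ∈ X, w47 x ≤ t47 i + t47 j) :
    Balanced47 (i ::ₘ j ::ₘ X) := by
  have hT : tPos47 (i ::ₘ j ::ₘ X) = t47 i + t47 j + tPos47 X := by
    simp only [tPos47_cons, add_assoc]
  refine ⟨by omega, ?_⟩
  simp only [Multiset.forall_mem_cons, hT, threshold47]
  refine ⟨by omega, by omega, fun x hx => ?_⟩
  have := hX x hx
  have := t47_le_tPos47 hx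
  omega

namespace PCriterion47

lemma of_tPos47_eq_zero (hT : tPos47 G = 0) (hn : nimValue47 G = 1) : PCriterion47 G :=
  Or.inl ⟨hT, hn⟩

lemma of_balanced47 (hB : Balanced47 G) (hn : nimValue47 G = 0) : PCriterion47 G :=
  Or.inr (Or.inl ⟨hB, hn⟩)

lemma of_dominated47 (hD : Dominated47 G) (hn : nimValue47 G = 3) : PCriterion47 G :=
  Or.inr (Or.inr ⟨hD, hn⟩)

lemma tPos47_eq_zero (hG : PCriterion47 G) (hn : nimValue47 G = 1) : tPos47 G = 0 := by
  simpa [PCriterion47, hn] using hG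

lemma balanced47 (hG : PCriterion47 G) (hn : nimValue47 G = 0) : Balanced47 G := by
  simpa [PCriterion47, hn] using hG

lemma dominated47 (hG : PCriterion47 G) (hn : nimValue47 G = 3) : Dominated47 G := by
  simpa [PCriterion47, hn] using hG

lemma nimValue47_ne_two (hG : PCriterion47 G) : nimValue47 G ≠ 2 := by
  intro hn
  simp [PCriterion47, hn] at hG

end PCriterion47

end Threshold

/-! ### No move joins two positions satisfying the criterion -/

section NoMove

variable {G G' X : Multiset ℕ} {i j k : ℕ}

lemma Move47.not_dominated47_of_tPos47_eq_zero (h : Move47 G G') (hG : tPos47 G = 0) :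
    ¬ Dominated47 G' := by
  intro hG'
  obtain ⟨j, hj, hj8⟩ := hG'.exists_eight_le
  have := h.forall_le (fun _ => le_three_of_tPos47_eq_zero hG) j hj
  omega

lemma Dominated47.tPos47_split_ne_zero (hG : Dominated47 (k ::ₘ X)) (h : i + j = k) :
    tPos47 (i ::ₘ j ::ₘ X) ≠ 0 := by
  intro h0
  have hle := fun {x : ℕ} => le_three_of_tPos47_eq_zero (j := x) h0
  obtain ⟨x, hx, hx8⟩ := hG.exists_eight_le
  obtain rfl | hx := Multiset.mem_cons.1 hx
  · have := hle (x := i) (by simp)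
    have := hle (x := j) (by simp)
    omega
  · have := hle (x := x) (by simp [hx])
    omega

lemma tPos47_shrink_split_eq_zero (hG : tPos47 (k ::ₘ X) = 0) (h : i + j + 1 = k) (hi : 1 ≤ i)
    (hj : 1 ≤ j) : tPos47 (i ::ₘ j ::ₘ X) = 0 := by
  have hk := le_three_of_tPos47_eq_zero hG (Multiset.mem_cons_self k X)
  obtain ⟨rfl, rfl⟩ : i = 1 ∧ j = 1 := by omega
  rw [tPos47_cons] at hG
  have ht1 : t47 1 = 0 := rfl
  simp only [tPos47_cons]
  omega

/-- The pieces would be of size `1` or `3`, hence the heap itself `3`, `5` or `7`: the first has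
`t = 0`, and the others have threshold `t + 1`. -/
lemma Balanced47.tPos47_shrink_split_ne_zero (hG : Balanced47 (k ::ₘ X)) (h : i + j + 1 = k)
    (hi : 1 ≤ i) (hj : 1 ≤ j) : tPos47 (i ::ₘ j ::ₘ X) ≠ 0 := by
  intro h0
  have hw := threshold47_le_tPos47_cons_iff.1 (hG.2 k (Multiset.mem_cons_self k X))
  have hT := hG.1
  rw [tPos47_cons] at hT
  simp only [tPos47_cons] at h0
  have := t47_cases i
  have := t47_cases j
  have := t47_cases k
  have := w47_cases k
  omega

lemma Balanced47.not_dominated47_shrink (hG : Balanced47 (k ::ₘ X)) (h : i + 1 = k) :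
    ¬ Dominated47 (i ::ₘ X) := by
  rintro ⟨x, hx, hdom⟩
  obtain ⟨hk, hX⟩ := Multiset.forall_mem_cons.1 hG.2
  rw [threshold47_le_tPos47_cons_iff] at hk
  rw [tPos47_cons] at hdom
  have := t47_cases i
  have := t47_cases k
  obtain rfl | hx := Multiset.mem_cons.1 hx
  · have := w47_cases x
    have := w47_cases k
    simp only [threshold47] at hdom
    omega
  · have := hX x hx
    rw [tPos47_cons] at this
    omega

lemma Dominated47.not_balanced47_shrink (hG : Dominated47 (k ::ₘ X)) (h : i + 1 = k) :
    ¬ Balanced47 (i ::ₘ X) := by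
  rintro ⟨-, hbal⟩
  obtain ⟨hi, hX⟩ := Multiset.forall_mem_cons.1 hbal
  rw [threshold47_le_tPos47_cons_iff] at hi
  obtain ⟨x, hx, hdom⟩ := hG
  rw [tPos47_cons] at hdom
  have := t47_cases i
  have := t47_cases k
  obtain rfl | hx := Multiset.mem_cons.1 hx
  · have := w47_cases x
    have := w47_cases i
    simp only [threshold47] at hdom
    omega
  · have := hX x hx
    rw [tPos47_cons] at this
    omega

theorem PCriterion47.not_of_move (hG : PCriterion47 G) (h : Move47 G G') : ¬ PCriterion47 G' := by
  have hzero := h.not_dominated47_of_tPos47_eq_zero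
  intro hG'
  induction h using Move47.cases_on_heap with
  | split i j k X _ _ h =>
    have hn' := nimValue47_split (X := X) h
    obtain ⟨hT, hn⟩ | ⟨_, hn⟩ | ⟨hD, hn⟩ := hG
    · exact hzero hT (hG'.dominated47 (by simp [hn', hn]))
    · exact hG'.nimValue47_ne_two (by simp [hn', hn])
    · exact hD.tPos47_split_ne_zero h (hG'.tPos47_eq_zero (by simp [hn', hn]))
  | remove X =>
    have hn' := nimValue47_remove (X := X)
    have hT' : tPos47 (1 ::ₘ X) = tPos47 X := by simp [tPos47_cons, t47]
    obtain ⟨hT, hn⟩ | ⟨hB, hn⟩ | ⟨_, hn⟩ := hG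
    · exact (hG'.balanced47 (by simp [hn', hn])).1 (hT'.symm.trans hT)
    · exact hB.1 (hT'.trans (hG'.tPos47_eq_zero (by simp [hn', hn])))
    · exact hG'.nimValue47_ne_two (by simp [hn', hn])
  | shrink i k X _ h =>
    have hn' := nimValue47_shrink (X := X) h
    obtain ⟨_, hn⟩ | ⟨hB, hn⟩ | ⟨hD, hn⟩ := hG
    · exact hG'.nimValue47_ne_two (by simp [hn', hn])
    · exact hB.not_dominated47_shrink h (hG'.dominated47 (by simp [hn', hn]))
    · exact hD.not_balanced47_shrink h (hG'.balanced47 (by simp [hn', hn]))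
  | shrink_split i j k X hi hj h =>
    have hn' := nimValue47_shrink_split (X := X) h
    obtain ⟨hT, hn⟩ | ⟨hB, hn⟩ | ⟨_, hn⟩ := hG
    · exact (hG'.balanced47 (by simp [hn', hn])).1 (tPos47_shrink_split_eq_zero hT h hi hj)
    · exact hB.tPos47_shrink_split_ne_zero h hi hj (hG'.tPos47_eq_zero (by simp [hn', hn]))
    · exact hG'.nimValue47_ne_two (by simp [hn', hn])

end NoMove

/-! ### Winning moves -/

section WinningMove

variable {G X : Multiset ℕ} {k : ℕ}

lemma exists_move47_tPos47_eq_of_odd (hk : k ∈ G) (hodd : Odd k) (hk3 : k ≤ 3) :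
    ∃ G', Move47 G G' ∧ nimValue47 G' = nimValue47 G ^^^ 1 ∧ tPos47 G' = tPos47 G := by
  obtain ⟨X, rfl⟩ := Multiset.exists_cons_of_mem hk
  obtain rfl | rfl : k = 1 ∨ k = 3 := by rw [Nat.odd_iff] at hodd; omega
  · exact ⟨X, .remove, nimValue47_remove, by simp [tPos47_cons, t47]⟩
  · exact ⟨1 ::ₘ 1 ::ₘ X, .shrink_split le_rfl le_rfl rfl, nimValue47_shrink_split rfl,
      by simp [tPos47_cons, t47]⟩

lemma exists_move47_tPos47_pred_of_even (hk : k ∈ G) (heven : Even k) (hk1 : 1 ≤ k) (hk4 : k ≤ 4)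
    {d : ℕ} (hd : d = 2 ∨ d = 3) :
    ∃ G', Move47 G G' ∧ nimValue47 G' = nimValue47 G ^^^ d ∧ tPos47 G' + 1 = tPos47 G := by
  obtain ⟨X, rfl⟩ := Multiset.exists_cons_of_mem hk
  have hk24 : k = 2 ∨ k = 4 := by rw [Nat.even_iff] at heven; omega
  obtain ⟨m, hm, rfl⟩ : ∃ m, 1 ≤ m ∧ k = m + 1 := ⟨k - 1, by omega, by omega⟩
  have ht : t47 m + 1 = t47 (m + 1) := by
    have := t47_cases m
    have := t47_cases (m + 1)
    omega
  have ht1 : t47 1 = 0 := rfl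
  obtain rfl | rfl := hd
  · exact ⟨1 ::ₘ m ::ₘ X, .split le_rfl hm (add_comm 1 m), nimValue47_split (add_comm 1 m),
      by simp only [tPos47_cons]; omega⟩
  · exact ⟨m ::ₘ X, .shrink hm rfl, nimValue47_shrink rfl, by simp only [tPos47_cons]; omega⟩

lemma exists_pCriterion47_of_tPos47_eq_zero (hpos : ∀ j ∈ G, 1 ≤ j) (hne : G ≠ 0)
    (hT : tPos47 G = 0) (hn : nimValue47 G ≠ 1) : ∃ G', Move47 G G' ∧ PCriterion47 G' := by
  have hodd := odd_of_tPos47_eq_zero hpos hT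
  have hn0 : nimValue47 G = 0 := by
    have := nimValue47_le_one_of_forall_odd hodd
    omega
  obtain ⟨k, hk⟩ := Multiset.exists_mem_of_ne_zero hne
  obtain ⟨G', hmove, hn', hT'⟩ :=
    exists_move47_tPos47_eq_of_odd hk (hodd k hk) (le_three_of_tPos47_eq_zero hT hk)
  exact ⟨G', hmove, .of_tPos47_eq_zero (hT'.trans hT) (by simp [hn', hn0])⟩

lemma exists_pCriterion47_of_forall_le_four (hpos : ∀ j ∈ G, 1 ≤ j) (hle : ∀ j ∈ G, j ≤ 4)
    (hT : tPos47 G ≠ 0) (hn : nimValue47 G ≠ 0) : ∃ G', Move47 G G' ∧ PCriterion47 G' := by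
  have hlt := nimValue47_lt_four G
  by_cases hn1 : nimValue47 G = 1
  · obtain ⟨k, hk, hodd⟩ := exists_odd_of_nimValue47_ne hn (by omega)
    have hk3 : k ≤ 3 := by have := hle k hk; grind
    obtain ⟨G', hmove, hn', hT'⟩ := exists_move47_tPos47_eq_of_odd hk hodd hk3
    exact ⟨G', hmove, .of_balanced47
      (balanced47_of_forall_le_four (hmove.forall_le hle) (hT' ▸ hT)) (by simp [hn', hn1])⟩
  · obtain ⟨k, hk, heven⟩ := exists_even_of_one_lt_nimValue47 (G := G) (by omega)
    have hn23 : nimValue47 G = 2 ∨ nimValue47 G = 3 := by omega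
    have hoption := fun d => exists_move47_tPos47_pred_of_even hk heven (hpos k hk) (hle k hk)
      (d := d)
    by_cases hT1 : tPos47 G = 1
    · obtain ⟨G', hmove, hn', hT'⟩ := hoption (nimValue47 G ^^^ 1) (by
        rcases hn23 with h | h <;> simp [h])
      exact ⟨G', hmove, .of_tPos47_eq_zero (by omega) (by simp [hn'])⟩
    · obtain ⟨G', hmove, hn', hT'⟩ := hoption (nimValue47 G) hn23
      exact ⟨G', hmove, .of_balanced47
        (balanced47_of_forall_le_four (hmove.forall_le hle) (by omega)) (by simp [hn'])⟩

/-- The winning moves replace `k` by `2` and `k - 3`, by `2` and `k - 2`, or by `k - 1`. The last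
one fails only for `k = 6` next to heaps with `t = 0`, where `3` and `3` take its place. -/
lemma exists_pCriterion47_of_w47_le (hk5 : 5 ≤ k) (hmax : ∀ j ∈ X, j ≤ k)
    (hw : w47 k ≤ tPos47 X + 1) (hn : nimValue47 (k ::ₘ X) ≠ 0) :
    ∃ G', Move47 (k ::ₘ X) G' ∧ PCriterion47 G' := by
  have hlt := nimValue47_lt_four (k ::ₘ X)
  have ht2 : t47 2 = 1 := rfl
  have hw2 : w47 2 = 0 := rfl
  have hX : ∀ x ∈ X, w47 x ≤ max 1 (k - 6) := fun x hx => by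
    have := hmax x hx
    have := w47_cases x
    omega
  have hwk := w47_cases k
  obtain hn1 | hn2 | hn3 : nimValue47 (k ::ₘ X) = 1 ∨ nimValue47 (k ::ₘ X) = 2 ∨
    nimValue47 (k ::ₘ X) = 3 := by omega
  · have hk : 2 + (k - 3) + 1 = k := by omega
    have ht := t47_cases (k - 3)
    have hw' := w47_cases (k - 3)
    exact ⟨2 ::ₘ (k - 3) ::ₘ X, .shrink_split one_le_two (by omega) hk, .of_balanced47
      (balanced47_cons_cons (by omega) (by omega) (by omega) fun x hx => by grind)
      (by simp [nimValue47_shrink_split hk, hn1])⟩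
  · have hk : 2 + (k - 2) = k := by omega
    have ht := t47_cases (k - 2)
    have hw' := w47_cases (k - 2)
    exact ⟨2 ::ₘ (k - 2) ::ₘ X, .split one_le_two (by omega) hk, .of_balanced47
      (balanced47_cons_cons (by omega) (by omega) (by omega) fun x hx => by grind)
      (by simp [nimValue47_split hk, hn2])⟩
  · by_cases h6 : k = 6 ∧ tPos47 X = 0
    · obtain ⟨rfl, hT⟩ := h6
      exact ⟨3 ::ₘ 3 ::ₘ X, .split (by omega) (by omega) rfl, .of_tPos47_eq_zero
        (by simp [tPos47_cons, t47, hT])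
        (by simp [nimValue47_split (i := 3) (j := 3) (k := 6) rfl, hn3])⟩
    · have hk : k - 1 + 1 = k := by omega
      have ht := t47_cases (k - 1)
      have hw' := w47_cases (k - 1)
      exact ⟨(k - 1) ::ₘ X, .shrink (by omega) hk, .of_balanced47
        (balanced47_cons (by omega) (by omega) fun x hx => by grind)
        (by simp [nimValue47_shrink hk, hn3])⟩

lemma exists_pCriterion47_of_lt_w47_of_tPos47_ne_zero (hpos : ∀ j ∈ X, 1 ≤ j)
    (hX : tPos47 X ≠ 0) (hw : tPos47 X < w47 k) (hn : nimValue47 (k ::ₘ X) = 0) :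
    ∃ G', Move47 (k ::ₘ X) G' ∧ PCriterion47 G' := by
  obtain ⟨h, hh, ht⟩ : ∃ h ∈ X, t47 h ≠ 0 := by
    by_contra! h0
    exact hX (Multiset.sum_eq_zero (by simpa using h0))
  have hh1 := hpos h hh
  obtain ⟨Y, rfl⟩ := Multiset.exists_cons_of_mem hh
  have hth := t47_cases h
  have hth' := t47_cases (h - 1)
  have hsub : h - 1 + 1 = h := by omega
  rw [Multiset.cons_swap] at hn ⊢
  refine ⟨(h - 1) ::ₘ k ::ₘ Y, .shrink (by omega) hsub,
    .of_dominated47 ⟨k, by simp, ?_⟩ (by simp [nimValue47_shrink hsub, hn])⟩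
  simp only [tPos47_cons, threshold47] at hw ⊢
  omega

lemma exists_pCriterion47_of_lt_w47_of_tPos47_eq_zero (hpos : ∀ j ∈ X, 1 ≤ j)
    (hX : tPos47 X = 0) (hw : 0 < w47 k) (hn : nimValue47 (k ::ₘ X) = 0) :
    ∃ G', Move47 (k ::ₘ X) G' ∧ PCriterion47 G' := by
  have hodd : Odd k := by
    by_contra heven
    have hk : heapValue47 k = 2 := if_pos (Nat.not_odd_iff_even.1 heven)
    have hle := nimValue47_le_one_of_forall_odd (odd_of_tPos47_eq_zero hpos hX)
    rw [nimValue47_cons, Nat.xor_eq_zero_iff, hk] at hn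
    omega
  rw [Nat.odd_iff] at hodd
  have hwk := w47_cases k
  obtain rfl | rfl | hk9 : k = 5 ∨ k = 7 ∨ 9 ≤ k := by omega
  · exact ⟨1 ::ₘ 3 ::ₘ X, .shrink_split (by omega) (by omega) rfl, .of_tPos47_eq_zero
      (by simp [tPos47_cons, t47, hX])
      (by simp [nimValue47_shrink_split (i := 1) (j := 3) (k := 5) rfl, hn])⟩
  · exact ⟨3 ::ₘ 3 ::ₘ X, .shrink_split (by omega) (by omega) rfl, .of_tPos47_eq_zero
      (by simp [tPos47_cons, t47, hX])
      (by simp [nimValue47_shrink_split (i := 3) (j := 3) (k := 7) rfl, hn])⟩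
  · have hk : k - 1 + 1 = k := by omega
    have hw' := w47_cases (k - 1)
    refine ⟨(k - 1) ::ₘ X, .shrink (by omega) hk,
      .of_dominated47 ⟨k - 1, by simp, ?_⟩ (by simp [nimValue47_shrink hk, hn])⟩
    rw [tPos47_cons, threshold47]
    omega

lemma balanced47_of_nearly_equal {i j : ℕ} (hw : tPos47 X + 2 ≤ w47 k) (hle : i + j ≤ k)
    (hge : k ≤ i + j + 1) (hij : i ≤ j) (hji : j ≤ i + 1) : Balanced47 (i ::ₘ j ::ₘ X) := by
  have hwk := w47_cases k
  have hti := t47_cases i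
  have htj := t47_cases j
  have hwi := w47_cases i
  have hwj := w47_cases j
  refine balanced47_cons_cons (by omega) (by omega) (by omega) fun x hx => ?_
  have := t47_le_tPos47 hx
  have := t47_cases x
  have := w47_cases x
  omega

lemma exists_pCriterion47_of_add_two_le_w47 (hw : tPos47 X + 2 ≤ w47 k)
    (hn : nimValue47 (k ::ₘ X) = 1 ∨ nimValue47 (k ::ₘ X) = 2) :
    ∃ G', Move47 (k ::ₘ X) G' ∧ PCriterion47 G' := by
  have hwk := w47_cases k
  obtain hn1 | hn2 := hn
  · have hk : (k - 1) / 2 + k / 2 + 1 = k := by omega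
    exact ⟨((k - 1) / 2) ::ₘ (k / 2) ::ₘ X, .shrink_split (by omega) (by omega) hk, .of_balanced47
      (balanced47_of_nearly_equal hw (by omega) (by omega) (by omega) (by omega))
      (by simp [nimValue47_shrink_split hk, hn1])⟩
  · have hk : k / 2 + (k + 1) / 2 = k := by omega
    exact ⟨(k / 2) ::ₘ ((k + 1) / 2) ::ₘ X, .split (by omega) (by omega) hk, .of_balanced47
      (balanced47_of_nearly_equal hw (by omega) (by omega) (by omega) (by omega))
      (by simp [nimValue47_split hk, hn2])⟩

lemma exists_max_heap (hne : G ≠ 0) : ∃ k X, G = k ::ₘ X ∧ ∀ j ∈ X, j ≤ k := by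
  obtain ⟨k, hk, hmax⟩ := Finset.exists_max_image G.toFinset id
    (Multiset.toFinset_nonempty.2 hne)
  obtain ⟨X, rfl⟩ := Multiset.exists_cons_of_mem (Multiset.mem_toFinset.1 hk)
  exact ⟨k, X, rfl, fun j hj => hmax j (by simp [hj])⟩

theorem exists_pCriterion47_of_not (hpos : ∀ j ∈ G, 1 ≤ j) (hne : G ≠ 0)
    (hG : ¬ PCriterion47 G) : ∃ G', Move47 G G' ∧ PCriterion47 G' := by
  obtain ⟨k, X, rfl, hmax⟩ := exists_max_heap hne
  have hposX : ∀ j ∈ X, 1 ≤ j := fun j hj => hpos j (Multiset.mem_cons_of_mem hj)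
  have hlt := nimValue47_lt_four (k ::ₘ X)
  by_cases hT : tPos47 (k ::ₘ X) = 0
  · exact exists_pCriterion47_of_tPos47_eq_zero hpos hne hT fun hn => hG (.of_tPos47_eq_zero hT hn)
  by_cases hn : nimValue47 (k ::ₘ X) = 0
  · have hw : tPos47 X < w47 k := by
      by_contra! hw
      exact hG (.of_balanced47 ((balanced47_cons_iff hmax).2 ⟨hT, hw⟩) hn)
    by_cases hX : tPos47 X = 0
    · exact exists_pCriterion47_of_lt_w47_of_tPos47_eq_zero hposX hX (by omega) hn
    · exact exists_pCriterion47_of_lt_w47_of_tPos47_ne_zero hposX hX hw hn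
  obtain hw | hw := le_or_gt (w47 k) (tPos47 X + 1)
  · obtain hk5 | hk4 := Nat.lt_or_ge 4 k
    · exact exists_pCriterion47_of_w47_le hk5 hmax hw hn
    · refine exists_pCriterion47_of_forall_le_four hpos ?_ hT hn
      exact Multiset.forall_mem_cons.2 ⟨hk4, fun j hj => (hmax j hj).trans hk4⟩
  · have hn3 : nimValue47 (k ::ₘ X) ≠ 3 := fun hn3 =>
      hG (.of_dominated47 ((dominated47_cons_iff hmax).2 ⟨hT, hw⟩) hn3)
    exact exists_pCriterion47_of_add_two_le_w47 hw (by omega)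

theorem pCriterion47_iff_forall_option (hpos : ∀ j ∈ G, 1 ≤ j) :
    PCriterion47 G ↔ (∃ G', Move47 G G') ∧ ∀ G', Move47 G G' → ¬ PCriterion47 G' := by
  constructor
  · intro hG
    refine ⟨Move47.exists_of_ne_zero hpos ?_, fun G' => hG.not_of_move⟩
    rintro rfl
    simp [PCriterion47, Balanced47, Dominated47, tPos47, nimValue47] at hG
  · rintro ⟨⟨G', hmove⟩, hoption⟩
    have hne : G ≠ 0 := by
      rintro rfl
      simp [Move47] at hmove
    by_contra hG
    obtain ⟨G', hmove, hG'⟩ := exists_pCriterion47_of_not hpos hne hG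
    exact hoption G' hmove hG'

end WinningMove

/-- Allemang's characterization of the misère P-positions of 4.7.  Here `PP` is
the misère P-position predicate (a position is a P-position iff it has at
least one option and every option is an N-position), and `g` is the
normal-play Grundy function (characterized by the mex recursion). `G` is a
nonempty position with all heaps positive, `k` is a heap of maximal size in
`G`, and `X = G.erase k`. -/
theorem ppos47_characterization
    (g : Multiset ℕ → ℕ)
    (hg : ∀ G : Multiset ℕ, g G = mex {m | ∃ G', Move47 G G' ∧ g G' = m})
    (PP : Multiset ℕ → Prop)
    (hPP : ∀ G : Multiset ℕ,
      PP G ↔ ((∃ G', Move47 G G') ∧ ∀ G', Move47 G G' → ¬ PP G'))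
    (G : Multiset ℕ) (hpos : ∀ j ∈ G, 1 ≤ j)
    (k : ℕ) (hk : k ∈ G) (hmax : ∀ j ∈ G, j ≤ k) :
    PP G ↔
      (tPos47 G = 0 ∧ g G = 1) ∨
      (tPos47 G ≠ 0 ∧ w47 k ≤ tPos47 (G.erase k) ∧ g G = 0) ∨
      (tPos47 G ≠ 0 ∧ tPos47 (G.erase k) + 2 ≤ w47 k ∧ g G = 3) := by
  have hPP_iff : PP G ↔ PCriterion47 G := misereP_unique Move47.wellFounded
    (fun _ _ => Move47.forall_pos) (fun G _ => hPP G) (fun _ => pCriterion47_iff_forall_option) hpos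
  have hg_eq : g G = nimValue47 G := grundy_unique Move47.wellFounded
    (fun _ _ => Move47.forall_pos) (fun G _ => hg G) (fun _ => nimValue47_eq_mex) hpos
  obtain ⟨X, rfl⟩ := Multiset.exists_cons_of_mem hk
  have hmaxX : ∀ j ∈ X, j ≤ k := fun j hj => hmax j (Multiset.mem_cons_of_mem hj)
  rw [hPP_iff, hg_eq, PCriterion47, balanced47_cons_iff hmaxX, dominated47_cons_iff hmaxX,
    Multiset.erase_cons_head, and_assoc, and_assoc]
end

section
/- Let 𝓗 = {H_1, …, H_n} be a finite ordered set of generators with option assignment opts, and suppose that for every i, every option X₀ ∈ opts(H_i) is supported on generators H_j with j < i. Then for every X ∈ A and every option X' of X, X' <_lex X. -/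
/-- The options of a position `X` in the free commutative monoid (of finite
multisets) over a set of generators, with respect to an assignment `opts` of
finitely many options to each generator: replace one occurrence of a generator
`h` in `X` by one of its options `X₀`. -/
def IsOption {H : Type*} [DecidableEq H] (opts : H → Finset (Multiset H))
    (X X' : Multiset H) : Prop :=
  ∃ h ∈ X, ∃ X₀ ∈ opts h, X' = X.erase h + X₀

/-- The lexicographic order on multisets over generators `H_1, …, H_n`
(indexed by `Fin n`): `X <_lex Y` iff at the largest index at which the
multiplicities differ, `X` has the smaller multiplicity. -/
def LexLt {n : ℕ} (X Y : Multiset (Fin n)) : Prop :=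
  ∃ i : Fin n, X.count i < Y.count i ∧ ∀ j : Fin n, i < j → X.count j = Y.count j

section EraseAdd

variable {α : Type*} [DecidableEq α] {X X₀ : Multiset α} {h : α}

theorem count_erase_add_self_lt (hX : h ∈ X) (hX₀ : h ∉ X₀) :
    (X.erase h + X₀).count h < X.count h := by
  rw [Multiset.count_add, Multiset.count_erase_self, Multiset.count_eq_zero_of_notMem hX₀, add_zero]
  exact Nat.sub_one_lt (Multiset.count_ne_zero.mpr hX)

theorem count_erase_add_of_ne {j : α} (hj : j ≠ h) (hX₀ : j ∉ X₀) :
    (X.erase h + X₀).count j = X.count j := by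
  rw [Multiset.count_add, Multiset.count_erase_of_ne hj, Multiset.count_eq_zero_of_notMem hX₀,
    add_zero]

theorem toColex_count_erase_add_lt [Preorder α] (hX : h ∈ X) (hX₀ : ∀ j ∈ X₀, j < h) :
    toColex (fun j => (X.erase h + X₀).count j) < toColex (fun j => X.count j) := by
  refine ⟨h, fun j (hj : h < j) => ?_, ?_⟩
  · exact count_erase_add_of_ne hj.ne' fun hmem => hj.not_gt (hX₀ j hmem)
  · exact count_erase_add_self_lt hX fun hmem => (hX₀ h hmem).false

end EraseAdd

theorem lexLt_iff_toColex_count_lt {n : ℕ} {X Y : Multiset (Fin n)} :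
    LexLt X Y ↔ toColex (fun j => X.count j) < toColex (fun j => Y.count j) :=
  exists_congr fun _ => and_comm

theorem option_lexLt_general {α : Type*} [DecidableEq α] [Preorder α]
    {opts : α → Finset (Multiset α)} (hopts : ∀ i, ∀ X₀ ∈ opts i, ∀ j ∈ X₀, j < i)
    {X X' : Multiset α} (hX' : IsOption opts X X') :
    toColex (fun j => X'.count j) < toColex (fun j => X.count j) := by
  obtain ⟨h, hX, X₀, hX₀, rfl⟩ := hX'
  exact toColex_count_erase_add_lt hX (hopts h X₀ hX₀)

/-- If every option of each generator `H_i` is supported on generators `H_j`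
with `j < i`, then every option `X'` of every position `X` satisfies
`X' <_lex X`. -/
theorem option_lexLt {n : ℕ} (opts : Fin n → Finset (Multiset (Fin n)))
    (hopts : ∀ i : Fin n, ∀ X₀ ∈ opts i, ∀ j ∈ X₀, j < i) :
    ∀ X X' : Multiset (Fin n), IsOption opts X X' → LexLt X' X := by
  intro X X' hX'
  exact lexLt_iff_toColex_count_lt.mpr (option_lexLt_general hopts hX')
end

section
/- Suppose Y is subsumed by X, i.e. X <_lex Y, Φ(X) = Φ(Y), and Φ''X ⊆ Φ''Y. Then for every Z ∈ A: X + Z <_lex Y + Z, Φ(X + Z) = Φ(Y + Z), and Φ''(X + Z) ⊆ Φ''(Y + Z); consequently, if Φ(Y + Z) ∉ P and no option of Y + Z is mapped into P by Φ, then also Φ(X + Z) ∉ P and no option of X + Z is mapped into P by Φ. -/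
/-- `Φ''X`: the set of values of `Φ` on the options of `X`. -/
def PhiImage {H : Type*} [DecidableEq H] (opts : H → Finset (Multiset H))
    {Q : Type*} (Φ : Multiset H → Q) (X : Multiset H) : Set Q :=
  {q | ∃ X', IsOption opts X X' ∧ Φ X' = q}

/-!
A move in `X + Z` is a move in `X` or a move in `Z`, so for multiplicative `Φ` the set `Φ''(X + Z)`
is `Φ''X * Φ Z ∪ Φ X * Φ''Z`. This expression depends on `X` only through `Φ''X` and `Φ X`, and it
is monotone in `Φ''X`. The order `<_lex` is the colexicographic order on multiplicity functions,
which is translation invariant.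
-/

section Options

variable {H : Type*} [DecidableEq H] {opts : H → Finset (Multiset H)} {X X' Y Z Z' W : Multiset H}

theorem IsOption.add_right (hX' : IsOption opts X X') (Z : Multiset H) :
    IsOption opts (X + Z) (X' + Z) := by
  obtain ⟨h, hX, X₀, hX₀, rfl⟩ := hX'
  refine ⟨h, Multiset.mem_add.2 (.inl hX), X₀, hX₀, ?_⟩
  rw [Multiset.erase_add_left_pos _ hX, add_right_comm]

theorem IsOption.add_left (hZ' : IsOption opts Z Z') (X : Multiset H) :
    IsOption opts (X + Z) (X + Z') := by
  simpa only [add_comm X] using hZ'.add_right X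

theorem isOption_add_iff :
    IsOption opts (X + Z) W ↔
      (∃ X', IsOption opts X X' ∧ X' + Z = W) ∨ ∃ Z', IsOption opts Z Z' ∧ X + Z' = W := by
  constructor
  · rintro ⟨h, hXZ, X₀, hX₀, rfl⟩
    rcases Multiset.mem_add.1 hXZ with hX | hZ
    · refine .inl ⟨X.erase h + X₀, ⟨h, hX, X₀, hX₀, rfl⟩, ?_⟩
      rw [Multiset.erase_add_left_pos _ hX, add_right_comm]
    · refine .inr ⟨Z.erase h + X₀, ⟨h, hZ, X₀, hX₀, rfl⟩, ?_⟩
      rw [Multiset.erase_add_right_pos _ hZ, add_assoc]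
  · rintro (⟨X', hX', rfl⟩ | ⟨Z', hZ', rfl⟩)
    · exact hX'.add_right Z
    · exact hZ'.add_left X

theorem disjoint_phiImage_iff {Q : Type*} {Φ : Multiset H → Q} {P : Set Q} :
    Disjoint (PhiImage opts Φ X) P ↔ ∀ X', IsOption opts X X' → Φ X' ∉ P :=
  Set.disjoint_left.trans Set.forall_mem_image

variable {Q : Type*} [Mul Q] {Φ : Multiset H → Q}

theorem phiImage_add (hΦadd : ∀ X Y, Φ (X + Y) = Φ X * Φ Y) (X Z : Multiset H) :
    PhiImage opts Φ (X + Z) =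
      (· * Φ Z) '' PhiImage opts Φ X ∪ (Φ X * ·) '' PhiImage opts Φ Z := by
  ext q
  constructor
  · rintro ⟨W, hW, rfl⟩
    rcases isOption_add_iff.1 hW with ⟨X', hX', rfl⟩ | ⟨Z', hZ', rfl⟩
    · exact .inl ⟨Φ X', ⟨X', hX', rfl⟩, (hΦadd X' Z).symm⟩
    · exact .inr ⟨Φ Z', ⟨Z', hZ', rfl⟩, (hΦadd X Z').symm⟩
  · rintro (⟨_, ⟨X', hX', rfl⟩, rfl⟩ | ⟨_, ⟨Z', hZ', rfl⟩, rfl⟩)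
    · exact ⟨X' + Z, hX'.add_right Z, hΦadd X' Z⟩
    · exact ⟨X + Z', hZ'.add_left X, hΦadd X Z'⟩

theorem phiImage_add_subset_phiImage_add (hΦadd : ∀ X Y, Φ (X + Y) = Φ X * Φ Y)
    (hphi : Φ X = Φ Y) (hsub : PhiImage opts Φ X ⊆ PhiImage opts Φ Y) (Z : Multiset H) :
    PhiImage opts Φ (X + Z) ⊆ PhiImage opts Φ (Y + Z) := by
  rw [phiImage_add hΦadd, phiImage_add hΦadd, hphi]
  exact Set.union_subset_union_left _ (Set.image_mono hsub)

end Options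

theorem lexLt_iff_toColex_lt {n : ℕ} {X Y : Multiset (Fin n)} :
    LexLt X Y ↔ toColex (Multiset.toFinsupp X) < toColex (Multiset.toFinsupp Y) := by
  simp only [LexLt, Finsupp.Colex.lt_iff, ofColex_toColex, Multiset.toFinsupp_apply, and_comm]

theorem toColex_toFinsupp_add_lt_add_right {H : Type*} [LinearOrder H] {X Y : Multiset H}
    (hlex : toColex (Multiset.toFinsupp X) < toColex (Multiset.toFinsupp Y)) (Z : Multiset H) :
    toColex (Multiset.toFinsupp (X + Z)) < toColex (Multiset.toFinsupp (Y + Z)) := by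
  simpa only [Multiset.toFinsupp_add, toColex_add, add_lt_add_iff_right] using hlex

theorem subsumed_add_general {H : Type*} [LinearOrder H] (opts : H → Finset (Multiset H))
    {Q : Type*} [Mul Q] (P : Set Q) (Φ : Multiset H → Q)
    (hΦadd : ∀ X Y : Multiset H, Φ (X + Y) = Φ X * Φ Y) (X Y : Multiset H)
    (hlex : toColex (Multiset.toFinsupp X) < toColex (Multiset.toFinsupp Y))
    (hphi : Φ X = Φ Y) (hsub : PhiImage opts Φ X ⊆ PhiImage opts Φ Y) (Z : Multiset H) :
    toColex (Multiset.toFinsupp (X + Z)) < toColex (Multiset.toFinsupp (Y + Z)) ∧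
      Φ (X + Z) = Φ (Y + Z) ∧
      PhiImage opts Φ (X + Z) ⊆ PhiImage opts Φ (Y + Z) ∧
      ((Φ (Y + Z) ∉ P ∧ ∀ Y', IsOption opts (Y + Z) Y' → Φ Y' ∉ P) →
        (Φ (X + Z) ∉ P ∧ ∀ X', IsOption opts (X + Z) X' → Φ X' ∉ P)) := by
  have hvalue : Φ (X + Z) = Φ (Y + Z) := by rw [hΦadd, hΦadd, hphi]
  have himage : PhiImage opts Φ (X + Z) ⊆ PhiImage opts Φ (Y + Z) :=
    phiImage_add_subset_phiImage_add hΦadd hphi hsub Z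
  refine ⟨toColex_toFinsupp_add_lt_add_right hlex Z, hvalue, himage, ?_⟩
  simp only [← disjoint_phiImage_iff, hvalue]
  exact And.imp_right (Disjoint.mono_left himage)

/-- If `Y` is subsumed by `X` (that is, `X <_lex Y`, `Φ X = Φ Y`, and
`Φ''X ⊆ Φ''Y`), then for every `Z`: `X + Z <_lex Y + Z`,
`Φ(X + Z) = Φ(Y + Z)`, and `Φ''(X + Z) ⊆ Φ''(Y + Z)`; consequently, if
`Φ(Y + Z) ∉ P` and no option of `Y + Z` is mapped into `P` by `Φ`, then also
`Φ(X + Z) ∉ P` and no option of `X + Z` is mapped into `P` by `Φ`. -/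
theorem subsumed_add {n : ℕ} (opts : Fin n → Finset (Multiset (Fin n)))
    {Q : Type*} [CommMonoid Q] (P : Set Q)
    (Φ : Multiset (Fin n) → Q)
    (hΦ0 : Φ 0 = 1)
    (hΦadd : ∀ X Y : Multiset (Fin n), Φ (X + Y) = Φ X * Φ Y)
    (X Y : Multiset (Fin n))
    (hlex : LexLt X Y) (hphi : Φ X = Φ Y)
    (hsub : PhiImage opts Φ X ⊆ PhiImage opts Φ Y) :
    ∀ Z : Multiset (Fin n),
      LexLt (X + Z) (Y + Z) ∧
      Φ (X + Z) = Φ (Y + Z) ∧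
      PhiImage opts Φ (X + Z) ⊆ PhiImage opts Φ (Y + Z) ∧
      ((Φ (Y + Z) ∉ P ∧ ∀ Y', IsOption opts (Y + Z) Y' → Φ Y' ∉ P) →
        (Φ (X + Z) ∉ P ∧ ∀ X', IsOption opts (X + Z) X' → Φ X' ∉ P)) := by
  simp only [lexLt_iff_toColex_lt] at hlex ⊢
  exact subsumed_add_general opts P Φ hΦadd X Y hlex hphi hsub
end
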